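/- Let α = [0; a₁, a₂, …] ∈ (0,1) be the irrational number with partial quotients a_{n²} = 4n² and aₙ = 1 for n not a perfect square, let (qₙ) be the denominators of the convergents of α, and let (xₙ) be the increasing enumeration of {r qₙ : n ∈ ℕ, 1 ≤ r ≤ a_{n+1}}. Then the set-difference t^s_{(qₙ)}(𝕋) \ t^s_{(xₙ)}(𝕋) has cardinality 𝔠 (the cardinality of the continuum). -/

import Mathlib

open Filter Topology

noncomputable section

/-- The circle group `𝕋 = ℝ/ℤ`. -/
abbrev Circle1 : Type := AddCircle (1 : ℝ)

/-- A set of naturals has natural density zero. -/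
def DensityZero (A : Set ℕ) : Prop :=
  Tendsto (fun n : ℕ => ((A ∩ Set.Icc 1 n).ncard : ℝ) / n) atTop (𝓝 0)

/-- Statistical convergence to `0` of a sequence in the circle. -/
def StatTendstoZero (x : ℕ → Circle1) : Prop :=
  ∀ ε : ℝ, 0 < ε → DensityZero {n : ℕ | ε ≤ ‖x n‖}

/-- The characterized subgroup `t_(a_n)(𝕋)`. -/
def charSet (a : ℕ → ℤ) : Set Circle1 :=
  {x : Circle1 | Tendsto (fun n : ℕ => a n • x) atTop (𝓝 0)}

/-- The statistically characterized subgroup `t^s_(a_n)(𝕋)`. -/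
def statCharSet (a : ℕ → ℤ) : Set Circle1 :=
  {x : Circle1 | StatTendstoZero (fun n : ℕ => a n • x)}

namespace CF

/-- Gauss-map orbit of `α`: `G α 0 = α`, `G α (n+1) = {1 / G α n}`. -/
def G (α : ℝ) : ℕ → ℝ
  | 0 => α
  | n + 1 => Int.fract (G α n)⁻¹

/-- The partial quotients of the regular continued fraction `α = [0; a 1, a 2, …]`
(with the convention `a 0 = 0`). -/
def a (α : ℝ) : ℕ → ℕ
  | 0 => 0
  | n + 1 => ⌊(G α n)⁻¹⌋₊

/-- Denominators of the convergents of the continued fraction of `α`. -/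
def q (α : ℝ) : ℕ → ℕ
  | 0 => 1
  | 1 => a α 1
  | (n + 2) => a α (n + 2) * q α (n + 1) + q α n

/-- Numerators of the convergents of the continued fraction of `α`. -/
def p (α : ℝ) : ℕ → ℕ
  | 0 => 0
  | 1 => 1
  | (n + 2) => a α (n + 2) * p α (n + 1) + p α n

/-- `θ n = q n * α - p n`. -/
def θ (α : ℝ) (n : ℕ) : ℝ := (q α n : ℝ) * α - (p α n : ℝ)

end CF

open CF

namespace CF

variable {α : ℝ}

theorem irrational_G (hirr : Irrational α) (n : ℕ) : Irrational (G α n) := by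
  induction n with
  | zero => exact hirr
  | succ n ih =>
    have h : G α (n + 1) = (G α n)⁻¹ - (⌊(G α n)⁻¹⌋ : ℝ) := rfl
    rw [h, irrational_sub_intCast_iff, irrational_inv_iff]
    exact ih

theorem G_mem_Ioo (hα : α ∈ Set.Ioo (0 : ℝ) 1) (hirr : Irrational α) (n : ℕ) :
    G α n ∈ Set.Ioo (0 : ℝ) 1 := by
  cases n with
  | zero => exact hα
  | succ n =>
    exact ⟨lt_of_le_of_ne (Int.fract_nonneg _) (irrational_G hirr (n + 1)).ne_zero.symm,
      Int.fract_lt_one _⟩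

theorem G_succ (hα : α ∈ Set.Ioo (0 : ℝ) 1) (hirr : Irrational α) (n : ℕ) :
    G α (n + 1) = (G α n)⁻¹ - a α (n + 1) := by
  have h0 : 0 ≤ (G α n)⁻¹ := inv_nonneg.2 (G_mem_Ioo hα hirr n).1.le
  change Int.fract (G α n)⁻¹ = (G α n)⁻¹ - (⌊(G α n)⁻¹⌋₊ : ℝ)
  rw [Int.fract, natCast_floor_eq_intCast_floor h0]

theorem one_le_a_succ (hα : α ∈ Set.Ioo (0 : ℝ) 1) (hirr : Irrational α) (n : ℕ) :
    1 ≤ a α (n + 1) := by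
  have h := G_mem_Ioo hα hirr n
  change 1 ≤ ⌊(G α n)⁻¹⌋₊
  rw [Nat.one_le_floor_iff]
  exact (one_le_inv₀ h.1).2 h.2.le

theorem q_succ_succ (n : ℕ) : q α (n + 2) = a α (n + 2) * q α (n + 1) + q α n := rfl

theorem θ_succ_succ (n : ℕ) : θ α (n + 2) = a α (n + 2) * θ α (n + 1) + θ α n := by
  simp only [θ, q, p]
  push_cast
  ring

theorem θ_succ (hα : α ∈ Set.Ioo (0 : ℝ) 1) (hirr : Irrational α) (n : ℕ) :
    θ α (n + 1) = -(θ α n * G α (n + 1)) := by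
  induction n with
  | zero =>
    rw [G_succ hα hirr]
    have := hα.1.ne'
    simp only [θ, q, p, G]
    push_cast
    field_simp
    ring
  | succ n ih =>
    rw [θ_succ_succ, G_succ hα hirr (n + 1)]
    have := (G_mem_Ioo hα hirr (n + 1)).1.ne'
    have h : θ α n = -(θ α (n + 1) * (G α (n + 1))⁻¹) := by
      rw [ih]; field_simp
    rw [h]
    ring

theorem abs_θ_succ (hα : α ∈ Set.Ioo (0 : ℝ) 1) (hirr : Irrational α) (n : ℕ) :
    |θ α (n + 1)| = |θ α n| * G α (n + 1) := by
  rw [θ_succ hα hirr, abs_neg, abs_mul, abs_of_pos (G_mem_Ioo hα hirr _).1]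

theorem abs_θ_succ_le (hα : α ∈ Set.Ioo (0 : ℝ) 1) (hirr : Irrational α) (n : ℕ) :
    |θ α (n + 1)| ≤ |θ α n| := by
  rw [abs_θ_succ hα hirr]
  exact mul_le_of_le_one_right (abs_nonneg _) (G_mem_Ioo hα hirr _).2.le

theorem abs_θ_succ_succ (hα : α ∈ Set.Ioo (0 : ℝ) 1) (hirr : Irrational α) (n : ℕ) :
    |θ α (n + 2)| = |θ α n| - a α (n + 2) * |θ α (n + 1)| := by
  rw [abs_θ_succ hα hirr (n + 1), G_succ hα hirr (n + 1), abs_θ_succ hα hirr n]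
  have := (G_mem_Ioo hα hirr (n + 1)).1.ne'
  field_simp

theorem q_mul_abs_θ_add (hα : α ∈ Set.Ioo (0 : ℝ) 1) (hirr : Irrational α) (n : ℕ) :
    q α (n + 1) * |θ α n| + q α n * |θ α (n + 1)| = 1 := by
  induction n with
  | zero =>
    have h0 : |θ α 0| = α := by simp [θ, q, p, abs_of_pos hα.1]
    rw [abs_θ_succ hα hirr, G_succ hα hirr, h0]
    have := hα.1.ne'
    simp only [q, G]
    push_cast
    field_simp
    ring
  | succ n ih =>
    rw [abs_θ_succ_succ hα hirr, q_succ_succ]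
    push_cast
    linarith

theorem q_le_succ (hα : α ∈ Set.Ioo (0 : ℝ) 1) (hirr : Irrational α) (n : ℕ) :
    q α n ≤ q α (n + 1) := by
  cases n with
  | zero => exact one_le_a_succ hα hirr 0
  | succ n =>
    rw [q_succ_succ]
    nlinarith [one_le_a_succ hα hirr (n + 1)]

theorem monotone_q (hα : α ∈ Set.Ioo (0 : ℝ) 1) (hirr : Irrational α) : Monotone (q α) :=
  monotone_nat_of_le_succ (q_le_succ hα hirr)

theorem q_pos (hα : α ∈ Set.Ioo (0 : ℝ) 1) (hirr : Irrational α) (n : ℕ) : 0 < q α n :=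
  lt_of_lt_of_le Nat.one_pos (monotone_q hα hirr (Nat.zero_le n))

theorem a_mul_q_le (n : ℕ) : a α (n + 1) * q α n ≤ q α (n + 1) := by
  cases n with
  | zero => simp [q]
  | succ n => exact Nat.le_add_right _ _

theorem q_succ_le (hα : α ∈ Set.Ioo (0 : ℝ) 1) (hirr : Irrational α) (n : ℕ) :
    q α (n + 1) ≤ (a α (n + 1) + 1) * q α n := by
  cases n with
  | zero => simp [q]
  | succ n =>
    rw [q_succ_succ, add_mul, one_mul]
    exact Nat.add_le_add_left (q_le_succ hα hirr n) _

theorem two_pow_mul_q_le (hα : α ∈ Set.Ioo (0 : ℝ) 1) (hirr : Irrational α) (n L : ℕ) :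
    2 ^ (L / 2) * q α n ≤ q α (n + L) := by
  have h (i : ℕ) : 2 ^ i * q α n ≤ q α (n + 2 * i) := by
    induction i with
    | zero => simp
    | succ i ih =>
      have h1 : q α (n + 2 * (i + 1)) =
          a α (n + 2 * i + 2) * q α (n + 2 * i + 1) + q α (n + 2 * i) := q_succ_succ _
      have h2 := one_le_a_succ hα hirr (n + 2 * i + 1)
      have h3 := q_le_succ hα hirr (n + 2 * i)
      rw [h1, pow_succ]
      nlinarith
  exact (h _).trans (monotone_q hα hirr (by omega))

theorem abs_θ_le (hα : α ∈ Set.Ioo (0 : ℝ) 1) (hirr : Irrational α) (n : ℕ) :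
    q α (n + 1) * |θ α n| ≤ 1 := by
  have h := q_mul_abs_θ_add hα hirr n
  have : 0 ≤ q α n * |θ α (n + 1)| := by positivity
  linarith

theorem le_abs_θ (hα : α ∈ Set.Ioo (0 : ℝ) 1) (hirr : Irrational α) (n : ℕ) :
    1 ≤ 2 * (q α (n + 1) * |θ α n|) := by
  have h := q_mul_abs_θ_add hα hirr n
  have h1 : (q α n : ℝ) ≤ q α (n + 1) := by exact_mod_cast q_le_succ hα hirr n
  have h2 : q α n * |θ α (n + 1)| ≤ q α (n + 1) * |θ α n| :=
    mul_le_mul h1 (abs_θ_succ_le hα hirr n) (abs_nonneg _) (by positivity)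
  linarith

theorem q_mul_abs_θ_add_le (hα : α ∈ Set.Ioo (0 : ℝ) 1) (hirr : Irrational α) (n L : ℕ) :
    q α n * |θ α (n + L)| ≤ (1 / 2) ^ (L / 2) := by
  have h := abs_θ_le hα hirr (n + L)
  have h1 : (2 : ℝ) ^ (L / 2) * q α n ≤ q α (n + L + 1) := by
    exact_mod_cast (two_pow_mul_q_le hα hirr n L).trans (q_le_succ hα hirr _)
  rw [one_div, inv_pow, ← one_div, le_div_iff₀ (by positivity)]
  nlinarith [abs_nonneg (θ α (n + L))]

theorem tendsto_half_pow_div_two :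
    Tendsto (fun n : ℕ => (1 / 2 : ℝ) ^ (n / 2)) atTop (𝓝 0) :=
  (tendsto_pow_atTop_nhds_zero_of_lt_one (by norm_num) (by norm_num)).comp
    (Nat.tendsto_div_const_atTop two_ne_zero)

theorem tendsto_abs_θ (hα : α ∈ Set.Ioo (0 : ℝ) 1) (hirr : Irrational α) :
    Tendsto (fun n => |θ α n|) atTop (𝓝 0) := by
  refine squeeze_zero (fun n => abs_nonneg _) (fun n => ?_) tendsto_half_pow_div_two
  simpa [q] using q_mul_abs_θ_add_le hα hirr 0 n

/-- The digits `d` define an Ostrowski-type series `∑ d k * θ k` with a controlled tail. -/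
theorem exists_ostrowski_sum (hα : α ∈ Set.Ioo (0 : ℝ) 1) (hirr : Irrational α) {d : ℕ → ℕ}
    (hd : ∀ k, d k < a α (k + 1)) :
    ∃ y : ℝ, ∀ n, |y - ∑ k ∈ Finset.range (n + 1), d k * θ α k| ≤ 2 * |θ α n| := by
  set S : ℕ → ℝ := fun n => ∑ k ∈ Finset.range (n + 1), d k * θ α k with hS
  have key (n j : ℕ) : |S (n + j) - S n| ≤
      |θ α n| + |θ α (n + 1)| - (|θ α (n + j)| + |θ α (n + j + 1)|) := by
    induction j with
    | zero => simp
    | succ j ih =>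
      have h1 : S (n + (j + 1)) = S (n + j) + d (n + j + 1) * θ α (n + j + 1) :=
        Finset.sum_range_succ _ _
      have h2 : |d (n + j + 1) * θ α (n + j + 1)| ≤ a α (n + j + 2) * |θ α (n + j + 1)| := by
        rw [abs_mul, Nat.abs_cast]
        gcongr
        exact (hd _).le
      have h3 := abs_θ_succ_succ hα hirr (n + j)
      have h4 := abs_add_le (S (n + j) - S n) (d (n + j + 1) * θ α (n + j + 1))
      rw [h1, add_sub_right_comm]
      rw [← add_assoc n j 1]
      linarith
  have key' (n m : ℕ) (h : n ≤ m) : |S m - S n| ≤ 2 * |θ α n| := by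
    obtain ⟨j, rfl⟩ := Nat.exists_eq_add_of_le h
    have := key n j
    have := abs_θ_succ_le hα hirr n
    have := abs_nonneg (θ α (n + j))
    have := abs_nonneg (θ α (n + j + 1))
    linarith
  have hlim : Tendsto (fun n => 2 * |θ α n|) atTop (𝓝 0) := by
    simpa using (tendsto_abs_θ hα hirr).const_mul 2
  obtain ⟨y, hy⟩ := cauchySeq_tendsto_of_complete
    (cauchySeq_of_le_tendsto_0' (s := S) _ (fun n m h => by
      rw [dist_comm, Real.dist_eq]; exact key' n m h) hlim)
  refine ⟨y, fun n => le_of_tendsto ((hy.sub_const (S n)).abs) ?_⟩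
  filter_upwards [eventually_ge_atTop n] with m hm using key' n m hm

theorem sum_digits_mul_q_le {d : ℕ → ℕ} (hd : ∀ k, d k < a α (k + 1)) (n : ℕ) :
    ∑ k ∈ Finset.range n, d k * q α k ≤ q α n := by
  induction n with
  | zero => simp
  | succ n ih =>
    rw [Finset.sum_range_succ]
    have := a_mul_q_le (α := α) n
    have := Nat.mul_le_mul_right (q α n) (hd n)
    rw [Nat.succ_mul] at this
    omega

theorem norm_coe_le_abs (y : ℝ) : ‖(y : Circle1)‖ ≤ |y| :=
  QuotientAddGroup.norm_mk_le_norm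

/-- If all digits at distance at most `L` from `n = i + L` vanish, except possibly the one at `n`,
then `q n * y` is close to the single term `d n * q n * θ n` modulo `1`. -/
theorem norm_q_smul_sub_le (hα : α ∈ Set.Ioo (0 : ℝ) 1) (hirr : Irrational α) {d : ℕ → ℕ}
    (hd : ∀ k, d k < a α (k + 1)) {y : ℝ}
    (hy : ∀ n, |y - ∑ k ∈ Finset.range (n + 1), d k * θ α k| ≤ 2 * |θ α n|) (i L : ℕ)
    (hz : ∀ j, j ≤ 2 * L → j ≠ L → d (i + j) = 0) :
    ‖(q α (i + L) : ℤ) • (y : Circle1) -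
      ((d (i + L) * (q α (i + L) * θ α (i + L)) : ℝ) : Circle1)‖ ≤ 3 * (1 / 2) ^ (L / 2) := by
  set n := i + L with hn
  have hsum : ∑ k ∈ Finset.range (n + L + 1), d k * θ α k =
      ∑ k ∈ Finset.range i, d k * θ α k + d n * θ α n := by
    rw [show n + L + 1 = i + (2 * L + 1) by omega, Finset.sum_range_add,
      Finset.sum_eq_single (s := Finset.range (2 * L + 1)) L]
    · intro j hj hjL
      rw [hz j (by have := Finset.mem_range.1 hj; omega) hjL]
      simp
    · intro h
      exact absurd (Finset.mem_range.2 (by omega)) h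
  set z : ℤ := ∑ k ∈ Finset.range i, (d k : ℤ) * (q α k * p α n - q α n * p α k) with hzdef
  set P : ℝ := ((∑ k ∈ Finset.range i, d k * q α k : ℕ) : ℝ) with hP
  have hint : q α n * ∑ k ∈ Finset.range i, d k * θ α k = P * θ α n + z := by
    rw [hP, hzdef]
    push_cast
    rw [Finset.mul_sum, Finset.sum_mul, ← Finset.sum_add_distrib]
    refine Finset.sum_congr rfl fun k _ => ?_
    simp only [θ]
    ring
  set R : ℝ := y - ∑ k ∈ Finset.range (n + L + 1), d k * θ α k with hR
  have heq : q α n * y - d n * (q α n * θ α n) = (P * θ α n + q α n * R) + z := by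
    rw [hR, hsum]
    linear_combination hint
  have hcoe : (q α n : ℤ) • (y : Circle1) - ((d n * (q α n * θ α n) : ℝ) : Circle1) =
      ((P * θ α n + q α n * R : ℝ) : Circle1) := by
    have h1 : ((z : ℝ) : Circle1) = 0 := by simp
    have h2 : (q α n : ℤ) • (y : Circle1) = ((q α n * y : ℝ) : Circle1) := by
      rw [← AddCircle.coe_zsmul]; simp
    rw [h2, ← AddCircle.coe_sub, heq, AddCircle.coe_add, h1, add_zero]
  rw [hcoe]
  refine (norm_coe_le_abs _).trans ((abs_add_le _ _).trans ?_)
  have hb1 : |P * θ α n| ≤ (1 / 2) ^ (L / 2) := by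
    rw [abs_mul, hP, Nat.abs_cast]
    refine le_trans ?_ (q_mul_abs_θ_add_le hα hirr i L)
    gcongr
    exact sum_digits_mul_q_le hd i
  have hb2 : |q α n * R| ≤ 2 * (1 / 2) ^ (L / 2) := by
    rw [abs_mul, Nat.abs_cast]
    have h1 := hy (n + L)
    have h2 := q_mul_abs_θ_add_le hα hirr n L
    have h3 : (0 : ℝ) ≤ q α n := by positivity
    nlinarith
  linarith

end CF

theorem DensityZero.mono {A B : Set ℕ} (h : A ⊆ B) (hB : DensityZero B) : DensityZero A := by
  refine squeeze_zero (fun n => by positivity) (fun n => ?_) hB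
  gcongr
  exact (Set.finite_Icc 1 n).subset Set.inter_subset_right

theorem densityZero_near_squares (L : ℕ) :
    DensityZero {n : ℕ | ∃ j i, i ≤ 2 * L ∧ n + 1 + L = j ^ 2 + i} := by
  have hbound (N : ℕ) :
      ({n : ℕ | ∃ j i, i ≤ 2 * L ∧ n + 1 + L = j ^ 2 + i} ∩ Set.Icc 1 N).ncard ≤
        (Nat.sqrt N + L + 2) * (2 * L + 1) := by
    set F : Finset ℕ := (Finset.range (Nat.sqrt N + L + 2) ×ˢ Finset.range (2 * L + 1)).image
      fun z => z.1 ^ 2 + z.2 - (L + 1) with hF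
    have hsub : {n : ℕ | ∃ j i, i ≤ 2 * L ∧ n + 1 + L = j ^ 2 + i} ∩ Set.Icc 1 N ⊆ F := by
      rintro n ⟨⟨j, i, hi, hn⟩, -, hnN⟩
      rw [hF, Finset.mem_coe, Finset.mem_image]
      refine ⟨(j, i), Finset.mem_product.2 ⟨Finset.mem_range.2 ?_, Finset.mem_range.2 ?_⟩, ?_⟩
      · by_contra! hj
        have h1 : N < (Nat.sqrt N + 1) ^ 2 := Nat.lt_succ_sqrt' N
        have h2 : (Nat.sqrt N + L + 2) ^ 2 ≤ j ^ 2 := Nat.pow_le_pow_left hj 2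
        nlinarith
      · dsimp only
        omega
      · dsimp only
        omega
    calc _ ≤ (F : Set ℕ).ncard := Set.ncard_le_ncard hsub F.finite_toSet
      _ = F.card := Set.ncard_coe_finset F
      _ ≤ _ := Finset.card_image_le.trans (by simp)
  have hlim : Tendsto (fun N : ℕ => ((L + 3) * (2 * L + 1) : ℝ) * (√(N : ℝ))⁻¹) atTop (𝓝 0) := by
    simpa using ((Real.tendsto_sqrt_atTop.comp
      (tendsto_natCast_atTop_atTop (R := ℝ))).inv_tendsto_atTop.const_mul
        ((L + 3) * (2 * L + 1) : ℝ))
  refine squeeze_zero' (Eventually.of_forall fun N => by positivity) ?_ hlim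
  filter_upwards [eventually_ge_atTop 1] with N hN
  have hN' : (1 : ℝ) ≤ N := by exact_mod_cast hN
  have hs : 1 ≤ √(N : ℝ) := Real.one_le_sqrt.2 hN'
  have h1 : (Nat.sqrt N : ℝ) ≤ √(N : ℝ) := Real.nat_sqrt_le_real_sqrt
  have h2 : (({n : ℕ | ∃ j i, i ≤ 2 * L ∧ n + 1 + L = j ^ 2 + i} ∩ Set.Icc 1 N).ncard : ℝ) ≤
      (Nat.sqrt N + L + 2) * (2 * L + 1) := by exact_mod_cast hbound N
  rw [div_le_iff₀ (by linarith)]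
  have h3 : (L + 3) * (2 * L + 1) * (√(N : ℝ))⁻¹ * (N : ℝ) = (L + 3) * √(N : ℝ) * (2 * L + 1) := by
    nth_rewrite 2 [← Real.mul_self_sqrt (Nat.cast_nonneg N)]
    field_simp
  rw [h3]
  refine h2.trans ?_
  gcongr
  nlinarith [(Nat.cast_nonneg L : (0 : ℝ) ≤ L)]

/-- The digit sequence supported at the indices `m ^ 2 - 1`, whose value there is `2 * m ^ 2` or
`m ^ 2` according to the bit `s m`. -/
def squareDigit (s : ℕ → Bool) (k : ℕ) : ℕ :=
  if IsSquare (k + 1) then (k + 1) * (if s (Nat.sqrt (k + 1)) then 2 else 1) else 0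

theorem squareDigit_eq_zero (s : ℕ → Bool) {k : ℕ} (hk : ¬ IsSquare (k + 1)) :
    squareDigit s k = 0 := if_neg hk

theorem squareDigit_sq (s : ℕ → Bool) {m : ℕ} (hm : 1 ≤ m) :
    squareDigit s (m ^ 2 - 1) = m ^ 2 * (if s m then 2 else 1) := by
  have h : m ^ 2 - 1 + 1 = m ^ 2 := Nat.sub_add_cancel (Nat.one_le_pow _ _ hm)
  rw [squareDigit, h, if_pos ⟨m, sq m⟩, Nat.sqrt_eq']

theorem squareDigit_near_sq (s : ℕ → Bool) {m j : ℕ} (hm : 2 ≤ m) (hj : j ≤ 2 * m)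
    (hjm : j ≠ m) : squareDigit s (m ^ 2 - 1 - m + j) = 0 := by
  refine squareDigit_eq_zero s ?_
  rintro ⟨t, ht⟩
  have h2 : 2 * m ≤ m ^ 2 := by nlinarith
  have h3 : m ^ 2 + j = t * t + m := by omega
  rcases lt_trichotomy t m with h | h | h
  · nlinarith
  · subst h
    exact hjm (by nlinarith)
  · nlinarith

namespace CF

variable {α : ℝ}

/-- The partial quotient at `n` is `4 * n` if `n` is a square and `1` otherwise. -/
def SquarePattern (α : ℝ) : Prop :=
  ∀ n, a α (n + 1) = if IsSquare (n + 1) then 4 * (n + 1) else 1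

theorem SquarePattern.squareDigit_lt (ha : SquarePattern α) (s : ℕ → Bool) (k : ℕ) :
    squareDigit s k < a α (k + 1) := by
  rw [ha k, squareDigit]
  split_ifs <;> omega

theorem SquarePattern.a_sq (ha : SquarePattern α) {m : ℕ} (hm : 1 ≤ m) :
    a α (m ^ 2 - 1 + 1) = 4 * m ^ 2 := by
  have h : m ^ 2 - 1 + 1 = m ^ 2 := Nat.sub_add_cancel (Nat.one_le_pow _ _ hm)
  rw [ha, h, if_pos ⟨m, sq m⟩]

theorem SquarePattern.sq_mul_q_mul_abs_θ (ha : SquarePattern α) (hα : α ∈ Set.Ioo (0 : ℝ) 1)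
    (hirr : Irrational α) {m : ℕ} (hm : 1 ≤ m) :
    1 / 10 ≤ (m : ℝ) ^ 2 * |q α (m ^ 2 - 1) * θ α (m ^ 2 - 1)| ∧
      (m : ℝ) ^ 2 * |q α (m ^ 2 - 1) * θ α (m ^ 2 - 1)| ≤ 1 / 4 := by
  have h1 := abs_θ_le hα hirr (m ^ 2 - 1)
  have h2 := le_abs_θ hα hirr (m ^ 2 - 1)
  have h3 := a_mul_q_le (α := α) (m ^ 2 - 1)
  have h4 := q_succ_le hα hirr (m ^ 2 - 1)
  rw [ha.a_sq hm] at h3 h4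
  generalize q α (m ^ 2 - 1 + 1) = Q at *
  rw [abs_mul, Nat.abs_cast]
  have h3' : (4 * m ^ 2 * q α (m ^ 2 - 1) : ℝ) ≤ Q := by exact_mod_cast h3
  have h4' : (Q : ℝ) ≤ (4 * m ^ 2 + 1) * q α (m ^ 2 - 1) := by exact_mod_cast h4
  have hm' : (1 : ℝ) ≤ (m : ℝ) ^ 2 := by exact_mod_cast Nat.one_le_pow _ _ hm
  have hθ := abs_nonneg (θ α (m ^ 2 - 1))
  generalize |θ α (m ^ 2 - 1)| = t at *
  have h5 := mul_le_mul_of_nonneg_right h3' hθ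
  have h6 := mul_le_mul_of_nonneg_right h4' hθ
  have h7 : 0 ≤ q α (m ^ 2 - 1) * t := by positivity
  constructor
  · nlinarith
  · nlinarith

theorem norm_coe_eq_abs {y : ℝ} (hy : |y| ≤ 1 / 2) : ‖(y : Circle1)‖ = |y| :=
  (AddCircle.norm_coe_eq_abs_iff (1 : ℝ) one_ne_zero).2 (by simpa using hy)

/-- `y` is the sum of the series `∑ d k * θ k`, with an explicit tail bound. -/
def IsDigitSum (α : ℝ) (d : ℕ → ℕ) (y : ℝ) : Prop :=
  ∀ n, |y - ∑ k ∈ Finset.range (n + 1), d k * θ α k| ≤ 2 * |θ α n|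

theorem SquarePattern.norm_q_smul_sub_le (ha : SquarePattern α) (hα : α ∈ Set.Ioo (0 : ℝ) 1)
    (hirr : Irrational α) {s : ℕ → Bool} {y : ℝ} (hy : IsDigitSum α (squareDigit s) y)
    {m : ℕ} (hm : 2 ≤ m) :
    ‖(q α (m ^ 2 - 1) : ℤ) • (y : Circle1) - (((m : ℝ) ^ 2 * (if s m then 2 else 1) *
      (q α (m ^ 2 - 1) * θ α (m ^ 2 - 1)) : ℝ) : Circle1)‖ ≤ 3 * (1 / 2) ^ (m / 2) := by
  have h := CF.norm_q_smul_sub_le hα hirr (ha.squareDigit_lt s) hy (m ^ 2 - 1 - m) m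
    (fun j hj hjm => squareDigit_near_sq s hm hj hjm)
  have h1 : m ^ 2 - 1 - m + m = m ^ 2 - 1 := Nat.sub_add_cancel (by
    have : 2 * m ≤ m ^ 2 := by nlinarith
    omega)
  rw [h1, squareDigit_sq s (by omega)] at h
  push_cast at h
  exact h

theorem SquarePattern.mem_statCharSet_q (ha : SquarePattern α) (hα : α ∈ Set.Ioo (0 : ℝ) 1)
    (hirr : Irrational α) {s : ℕ → Bool} {y : ℝ} (hy : IsDigitSum α (squareDigit s) y) :
    (y : Circle1) ∈ statCharSet (fun n => (q α n : ℤ)) := by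
  intro ε hε
  have hlim : Tendsto (fun n : ℕ => 3 * (1 / 2 : ℝ) ^ (n / 2)) atTop (𝓝 0) := by
    simpa using tendsto_half_pow_div_two.const_mul 3
  obtain ⟨L, hL⟩ := (hlim.eventually_lt_const hε).exists
  refine (densityZero_near_squares L).mono fun n hn => ?_
  by_contra hcon
  refine absurd hn (not_le.2 (lt_of_le_of_lt ?_ hL))
  have hLn : L ≤ n := by
    by_contra! h
    exact hcon ⟨0, n + 1 + L, by omega, by ring⟩
  have hz (j : ℕ) (hj : j ≤ 2 * L) : squareDigit s (n - L + j) = 0 := by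
    refine squareDigit_eq_zero s ?_
    rintro ⟨t, ht⟩
    refine hcon ⟨t, 2 * L - j, by omega, ?_⟩
    rw [sq]
    omega
  have h := CF.norm_q_smul_sub_le hα hirr (ha.squareDigit_lt s) hy (n - L) L
    (fun j hj _ => hz j hj)
  rw [hz L (by omega), Nat.sub_add_cancel hLn] at h
  simpa using h

theorem SquarePattern.eventually_le_norm (ha : SquarePattern α) (hα : α ∈ Set.Ioo (0 : ℝ) 1)
    (hirr : Irrational α) {s : ℕ → Bool} {y : ℝ} (hy : IsDigitSum α (squareDigit s) y) :
    ∀ᶠ m : ℕ in atTop, 1 / 11 ≤ ‖(q α (m ^ 2 - 1) : ℤ) • (y : Circle1)‖ := by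
  have hlim : Tendsto (fun n : ℕ => 3 * (1 / 2 : ℝ) ^ (n / 2)) atTop (𝓝 0) := by
    simpa using tendsto_half_pow_div_two.const_mul 3
  filter_upwards [hlim.eventually_lt_const (show (0 : ℝ) < 1 / 110 by norm_num),
    eventually_ge_atTop 2] with m hm hm2
  have h := ha.norm_q_smul_sub_le hα hirr hy hm2
  obtain ⟨h1, h2⟩ := ha.sq_mul_q_mul_abs_θ hα hirr (show 1 ≤ m by omega)
  set w := (m : ℝ) ^ 2 * (if s m then 2 else 1) * (q α (m ^ 2 - 1) * θ α (m ^ 2 - 1)) with hw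
  have hwabs : |w| = (if s m then 2 else 1) *
      ((m : ℝ) ^ 2 * |q α (m ^ 2 - 1) * θ α (m ^ 2 - 1)|) := by
    rw [hw, abs_mul, abs_of_nonneg (by split_ifs <;> positivity)]
    ring
  have hw1 : 1 / 10 ≤ |w| := by
    rw [hwabs]; split_ifs <;> linarith
  have hw2 : |w| ≤ 1 / 2 := by
    rw [hwabs]; split_ifs <;> linarith
  rw [← norm_coe_eq_abs hw2] at hw1
  have h3 := norm_sub_norm_le (w : Circle1) ((q α (m ^ 2 - 1) : ℤ) • (y : Circle1))
  rw [norm_sub_rev] at h3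
  linarith

theorem SquarePattern.eventually_bit_eq (ha : SquarePattern α) (hα : α ∈ Set.Ioo (0 : ℝ) 1)
    (hirr : Irrational α) {s s' : ℕ → Bool} {y y' : ℝ} (hy : IsDigitSum α (squareDigit s) y)
    (hy' : IsDigitSum α (squareDigit s') y') (hyy : (y : Circle1) = y') :
    ∀ᶠ m : ℕ in atTop, s m = s' m := by
  have hlim : Tendsto (fun n : ℕ => 3 * (1 / 2 : ℝ) ^ (n / 2)) atTop (𝓝 0) := by
    simpa using tendsto_half_pow_div_two.const_mul 3
  filter_upwards [hlim.eventually_lt_const (show (0 : ℝ) < 1 / 30 by norm_num),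
    eventually_ge_atTop 2] with m hm hm2
  have h := ha.norm_q_smul_sub_le hα hirr hy hm2
  have h' := ha.norm_q_smul_sub_le hα hirr hy' hm2
  obtain ⟨h1, h2⟩ := ha.sq_mul_q_mul_abs_θ hα hirr (show 1 ≤ m by omega)
  rw [← hyy] at h'
  set Y := (q α (m ^ 2 - 1) : ℤ) • (y : Circle1)
  by_contra hne
  set w := (m : ℝ) ^ 2 * (if s m then 2 else 1) * (q α (m ^ 2 - 1) * θ α (m ^ 2 - 1)) with hw
  set w' := (m : ℝ) ^ 2 * (if s' m then 2 else 1) * (q α (m ^ 2 - 1) * θ α (m ^ 2 - 1)) with hw'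
  have hwabs : |w - w'| = (m : ℝ) ^ 2 * |q α (m ^ 2 - 1) * θ α (m ^ 2 - 1)| := by
    have hm0 : (0 : ℝ) ≤ (m : ℝ) ^ 2 := by positivity
    rw [hw, hw', ← sub_mul, ← mul_sub, abs_mul, abs_mul, abs_of_nonneg hm0]
    cases hs : s m <;> cases hs' : s' m <;> simp_all <;> norm_num
  have h3 := norm_coe_eq_abs (y := w - w') (by linarith)
  have h4 : ((w - w' : ℝ) : Circle1) = (Y - w') - (Y - w) := by
    rw [AddCircle.coe_sub]; abel
  have h5 := norm_sub_le (Y - (w' : Circle1)) (Y - (w : Circle1))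
  rw [← h4, h3, hwabs] at h5
  linarith

theorem SquarePattern.exists_block (ha : SquarePattern α) (hα : α ∈ Set.Ioo (0 : ℝ) 1)
    (hirr : Irrational α) {y : Circle1} {m : ℕ} (hm : 2 ≤ m)
    (hy : 1 / 11 ≤ ‖(q α (m ^ 2 - 1) : ℤ) • y‖) :
    ∃ B : Finset ℕ, B.card = 2 * m ^ 2 ∧ ∀ v ∈ B, q α (m ^ 2 - 1) ≤ v ∧ v < q α (m ^ 2) ∧
      1 / 22 ≤ ‖(v : ℤ) • y‖ ∧ ∃ n r : ℕ, 1 ≤ r ∧ r ≤ a α (n + 1) ∧ v = r * q α n := by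
  set Q := q α (m ^ 2 - 1) with hQ
  have hQpos : 0 < Q := q_pos hα hirr _
  have hpair (k : ℕ) : ∃ r, (r = 2 * k + 1 ∨ r = 2 * k + 2) ∧
      1 / 22 ≤ ‖((r * Q : ℕ) : ℤ) • y‖ := by
    by_contra! hcon
    have h1 := hcon (2 * k + 1) (Or.inl rfl)
    have h2 := hcon (2 * k + 2) (Or.inr rfl)
    have h3 : (Q : ℤ) • y =
        (((2 * k + 2) * Q : ℕ) : ℤ) • y - (((2 * k + 1) * Q : ℕ) : ℤ) • y := by
      rw [← sub_smul]
      congr 1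
      push_cast
      ring
    have h4 := norm_sub_le ((((2 * k + 2) * Q : ℕ) : ℤ) • y) ((((2 * k + 1) * Q : ℕ) : ℤ) • y)
    rw [← h3] at h4
    linarith
  choose r hr hbad using hpair
  refine ⟨(Finset.range (2 * m ^ 2)).image fun k => r k * Q, ?_, ?_⟩
  · rw [Finset.card_image_of_injective, Finset.card_range]
    intro k l hkl
    have h1 : r k = r l := Nat.eq_of_mul_eq_mul_right hQpos hkl
    have h2 := hr k
    have h3 := hr l
    omega
  · intro v hv
    obtain ⟨k, hk, rfl⟩ := Finset.mem_image.1 hv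
    have hk' := Finset.mem_range.1 hk
    have h1 := hr k
    have hr1 : 1 ≤ r k := by omega
    have hr2 : r k ≤ 4 * m ^ 2 := by omega
    refine ⟨Nat.le_mul_of_pos_left _ hr1, ?_, hbad k, m ^ 2 - 1, r k, hr1, ?_, rfl⟩
    · obtain ⟨l, hl⟩ : ∃ l, m ^ 2 = l + 2 := Nat.exists_eq_add_of_le' (by nlinarith)
      have h2 := ha.a_sq (show 1 ≤ m by omega)
      have h3 := Nat.mul_le_mul_right Q hr2
      have h4 := q_pos hα hirr l
      rw [hl] at h2 h3 hQ ⊢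
      rw [q_succ_succ]
      change a α (l + 2) = _ at h2
      change Q = q α (l + 1) at hQ
      rw [h2, ← hQ]
      omega
    · rw [ha.a_sq (by omega)]
      exact hr2

theorem SquarePattern.exists_blocks (ha : SquarePattern α) (hα : α ∈ Set.Ioo (0 : ℝ) 1)
    (hirr : Irrational α) {y : Circle1} {m₀ : ℕ} (hm₀ : 2 ≤ m₀)
    (hy : ∀ m, m₀ ≤ m → 1 / 11 ≤ ‖(q α (m ^ 2 - 1) : ℤ) • y‖) (j : ℕ) :
    ∃ B : Finset ℕ, B.card = 2 * ∑ i ∈ Finset.range j, (m₀ + i) ^ 2 ∧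
      ∀ v ∈ B, v < q α ((m₀ + j) ^ 2 - 1) ∧ 1 / 22 ≤ ‖(v : ℤ) • y‖ ∧
        ∃ n r : ℕ, 1 ≤ r ∧ r ≤ a α (n + 1) ∧ v = r * q α n := by
  induction j with
  | zero => exact ⟨∅, by simp, by simp⟩
  | succ j ih =>
    obtain ⟨B, hB, hB'⟩ := ih
    obtain ⟨C, hC, hC'⟩ := ha.exists_block hα hirr (show 2 ≤ m₀ + j by omega)
      (hy (m₀ + j) (by omega))
    have hdisj : Disjoint B C := Finset.disjoint_left.2 fun v hvB hvC =>
      absurd (hB' v hvB).1 (not_lt.2 (hC' v hvC).1)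
    have hle : q α ((m₀ + j) ^ 2) ≤ q α ((m₀ + (j + 1)) ^ 2 - 1) :=
      monotone_q hα hirr (Nat.le_sub_of_add_le (Nat.pow_lt_pow_left (by omega) two_ne_zero))
    have hle' : q α ((m₀ + j) ^ 2 - 1) ≤ q α ((m₀ + j) ^ 2) :=
      monotone_q hα hirr (Nat.sub_le _ _)
    refine ⟨B ∪ C, ?_, fun v hv => ?_⟩
    · rw [Finset.card_union_of_disjoint hdisj, hB, hC, Finset.sum_range_succ, mul_add]
    · rcases Finset.mem_union.1 hv with h | h
      · exact ⟨((hB' v h).1.trans_le hle').trans_le hle, (hB' v h).2⟩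
      · exact ⟨(hC' v h).2.1.trans_le hle, (hC' v h).2.2⟩

theorem SquarePattern.sum_a_le (ha : SquarePattern α) (n : ℕ) :
    ∑ i ∈ Finset.range n, a α (i + 1) ≤ n + 4 * ∑ m ∈ Finset.range (Nat.sqrt n + 1), m ^ 2 := by
  induction n with
  | zero => simp
  | succ n ih =>
    rw [Finset.sum_range_succ, ha n]
    split_ifs with h
    · obtain ⟨t, ht⟩ := h
      obtain ⟨u, rfl⟩ : ∃ u, t = u + 1 := Nat.exists_eq_add_of_le' (by
        rcases Nat.eq_zero_or_pos t with rfl | h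
        · omega
        · exact h)
      have h1 : Nat.sqrt (n + 1) = u + 1 := by rw [ht, Nat.sqrt_eq]
      have h2 : Nat.sqrt n = u := (Nat.eq_sqrt.2 ⟨by nlinarith, by omega⟩).symm
      rw [h1, Finset.sum_range_succ, sq (u + 1), ← ht]
      rw [h2] at ih
      omega
    · have h1 : ∑ m ∈ Finset.range (Nat.sqrt n + 1), m ^ 2 ≤
          ∑ m ∈ Finset.range (Nat.sqrt (n + 1) + 1), m ^ 2 :=
        Finset.sum_le_sum_of_subset (Finset.range_mono
          (Nat.add_le_add_right (Nat.sqrt_le_sqrt (Nat.le_succ n)) 1))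
      omega

theorem index_le_sum_a (hα : α ∈ Set.Ioo (0 : ℝ) 1) (hirr : Irrational α)
    {x : ℕ → ℕ} (hmono : StrictMono x)
    (hrange : Set.range x =
      {m : ℕ | ∃ n r : ℕ, 1 ≤ r ∧ r ≤ a α (n + 1) ∧ m = r * q α n}) {N n : ℕ}
    (hN : x N = q α n) : N ≤ ∑ i ∈ Finset.range n, a α (i + 1) := by
  have hsub : (Finset.range N).image x ⊆
      (Finset.range n).biUnion fun i => (Finset.Icc 1 (a α (i + 1))).image (· * q α i) := by
    intro v hv
    obtain ⟨k, hk, rfl⟩ := Finset.mem_image.1 hv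
    have hlt : x k < q α n := hN ▸ hmono (Finset.mem_range.1 hk)
    obtain ⟨i, r, hr1, hr2, hxr⟩ : x k ∈ {m : ℕ | ∃ n r : ℕ, 1 ≤ r ∧ r ≤ a α (n + 1) ∧
        m = r * q α n} := hrange ▸ Set.mem_range_self k
    refine Finset.mem_biUnion.2 ⟨i, Finset.mem_range.2 ?_, Finset.mem_image.2
      ⟨r, Finset.mem_Icc.2 ⟨hr1, hr2⟩, hxr.symm⟩⟩
    by_contra! hni
    have h1 := monotone_q hα hirr hni
    have h2 : q α i ≤ r * q α i := Nat.le_mul_of_pos_left _ hr1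
    omega
  calc N = ((Finset.range N).image x).card := by
        rw [Finset.card_image_of_injective _ hmono.injective, Finset.card_range]
    _ ≤ _ := Finset.card_le_card hsub
    _ ≤ _ := Finset.card_biUnion_le
    _ ≤ _ := Finset.sum_le_sum fun i _ => Finset.card_image_le.trans (by simp)

theorem SquarePattern.not_mem_statCharSet (ha : SquarePattern α)
    (hα : α ∈ Set.Ioo (0 : ℝ) 1) (hirr : Irrational α) {x : ℕ → ℕ} (hmono : StrictMono x)
    (hrange : Set.range x =
      {m : ℕ | ∃ n r : ℕ, 1 ≤ r ∧ r ≤ a α (n + 1) ∧ m = r * q α n}) {y : Circle1}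
    (hy : ∀ᶠ m : ℕ in atTop, 1 / 11 ≤ ‖(q α (m ^ 2 - 1) : ℤ) • y‖) :
    y ∉ statCharSet (fun n => (x n : ℤ)) := by
  intro hmem
  have hdens := hmem (1 / 22) (by norm_num)
  obtain ⟨N₀, hN₀⟩ := eventually_atTop.1
    (Tendsto.eventually_lt_const (show (0 : ℝ) < 1 / 10 by norm_num) hdens)
  obtain ⟨m₀, hm₀⟩ := eventually_atTop.1 (hy.and (eventually_ge_atTop 2))
  have hm₀2 : 2 ≤ m₀ := (hm₀ m₀ le_rfl).2
  set S₀ := ∑ i ∈ Finset.range m₀, i ^ 2 with hS₀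
  set j := 2 * S₀ + N₀ + 10 with hj
  set W := ∑ i ∈ Finset.range j, (m₀ + i) ^ 2 with hW
  obtain ⟨B, hB, hB'⟩ := ha.exists_blocks hα hirr hm₀2 (fun m hm => (hm₀ m hm).1) j
  have hWj : j ≤ W := by
    calc j = ∑ i ∈ Finset.range j, 1 := by simp
      _ ≤ W := Finset.sum_le_sum fun i _ => Nat.one_le_pow _ _ (by omega)
  have hMW : (m₀ + j) ^ 2 ≤ 4 * W := by
    have h1 : (m₀ + (j - 1)) ^ 2 ≤ W :=
      Finset.single_le_sum (f := fun i => (m₀ + i) ^ 2) (fun _ _ => Nat.zero_le _)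
        (Finset.mem_range.2 (by omega))
    have h2 : m₀ + j ≤ 2 * (m₀ + (j - 1)) := by omega
    nlinarith
  obtain ⟨N, hN⟩ : q α ((m₀ + j) ^ 2 - 1) ∈ Set.range x := by
    rw [hrange]
    exact ⟨_, 1, le_rfl, one_le_a_succ hα hirr _, (one_mul _).symm⟩
  have hsqrt : Nat.sqrt ((m₀ + j) ^ 2 - 1) + 1 = m₀ + j := by
    obtain ⟨u, hu⟩ : ∃ u, m₀ + j = u + 1 := Nat.exists_eq_add_of_le' (by omega)
    rw [hu]
    congr 1
    refine (Nat.eq_sqrt.2 ⟨Nat.le_sub_of_add_le (by nlinarith), ?_⟩).symm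
    rw [← sq]
    exact Nat.sub_lt (by positivity) Nat.one_pos
  have hNle : N ≤ 4 * S₀ + 8 * W := by
    have h1 := (index_le_sum_a hα hirr hmono hrange hN).trans (ha.sum_a_le _)
    rw [hsqrt, Finset.sum_range_add] at h1
    have h2 := Nat.sub_le ((m₀ + j) ^ 2) 1
    omega
  set I : Finset ℕ := {n ∈ Finset.range N | 1 / 22 ≤ ‖(x n : ℤ) • y‖} with hI
  have hBI : B.card ≤ I.card := by
    refine (Finset.card_le_card (fun v hv => ?_)).trans (Finset.card_image_le (f := x))
    obtain ⟨h1, h2, h3⟩ := hB' v hv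
    obtain ⟨k, rfl⟩ : v ∈ Set.range x := hrange ▸ h3
    refine Finset.mem_image_of_mem x (Finset.mem_filter.2 ⟨Finset.mem_range.2 ?_, h2⟩)
    rw [← hN] at h1
    exact hmono.lt_iff_lt.1 h1
  have hIN : I.card ≤ N := (Finset.card_filter_le _ _).trans (by simp)
  have hcard : I.card - 1 ≤
      ({n : ℕ | 1 / 22 ≤ ‖(x n : ℤ) • y‖} ∩ Set.Icc 1 N).ncard := by
    refine Finset.pred_card_le_card_erase (a := 0) |>.trans ?_
    rw [← Set.ncard_coe_finset]
    refine Set.ncard_le_ncard (fun n hn => ?_) ((Set.finite_Icc 1 N).subset Set.inter_subset_right)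
    obtain ⟨h0, h1⟩ := Finset.mem_erase.1 (Finset.mem_coe.1 hn)
    obtain ⟨h2, h3⟩ := Finset.mem_filter.1 h1
    exact ⟨h3, Nat.one_le_iff_ne_zero.2 h0, (Finset.mem_range.1 h2).le⟩
  have hlt := hN₀ N (by omega)
  have hNpos : (0 : ℝ) < N := by
    have : 0 < N := by omega
    exact_mod_cast this
  rw [div_lt_iff₀ hNpos] at hlt
  have h1 : 2 * W - 1 ≤ ({n : ℕ | 1 / 22 ≤ ‖(x n : ℤ) • y‖} ∩ Set.Icc 1 N).ncard := by omega
  have h2 : 10 * ({n : ℕ | 1 / 22 ≤ ‖(x n : ℤ) • y‖} ∩ Set.Icc 1 N).ncard < N := by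
    have : (10 : ℝ) * ({n : ℕ | 1 / 22 ≤ ‖(x n : ℤ) • y‖} ∩ Set.Icc 1 N).ncard < N := by
      linarith
    exact_mod_cast this
  omega

end CF

/-- **Corollary 3.5.** For `α` with `a_{n²} = 4n²` and `aₙ = 1` otherwise,
`|t^s_(qₙ)(𝕋) \ t^s_(xₙ)(𝕋)| = 𝔠`. -/
theorem stmt_11 (α : ℝ) (hα : α ∈ Set.Ioo (0 : ℝ) 1) (hirr : Irrational α)
    (hsq : ∀ m : ℕ, 1 ≤ m → a α (m ^ 2) = 4 * m ^ 2)
    (hnsq : ∀ n : ℕ, 1 ≤ n → (∀ m : ℕ, n ≠ m ^ 2) → a α n = 1)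
    (x : ℕ → ℕ) (hmono : StrictMono x)
    (hrange : Set.range x =
      {m : ℕ | ∃ n r : ℕ, 1 ≤ r ∧ r ≤ a α (n + 1) ∧ m = r * q α n}) :
    Cardinal.mk
      ↥(statCharSet (fun n => (q α n : ℤ)) \ statCharSet (fun n => (x n : ℤ))) =
      Cardinal.continuum := by
  have ha : SquarePattern α := by
    intro n
    split_ifs with h
    · obtain ⟨m, hm⟩ := h
      rw [← sq] at hm
      rw [hm]
      exact hsq m (Nat.one_le_iff_ne_zero.2 (by rintro rfl; simp at hm))
    · exact hnsq _ (by omega) fun m hm => h ⟨m, hm.trans (sq m)⟩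
  apply le_antisymm
  · refine (Cardinal.mk_set_le _).trans ?_
    rw [← Cardinal.mk_real]
    exact Cardinal.mk_le_of_surjective (QuotientAddGroup.mk_surjective
      (s := AddSubgroup.zmultiples (1 : ℝ)))
  · have hex (s : ℕ → Bool) : ∃ y, IsDigitSum α (squareDigit s) y :=
      exists_ostrowski_sum hα hirr (ha.squareDigit_lt s)
    choose Y hY using hex
    -- Every bit of `t` is repeated infinitely often, so eventual agreement determines `t`.
    set spread : (ℕ → Bool) → ℕ → Bool := fun t m => t (Nat.unpair m).1
    have hcont : Cardinal.mk (ℕ → Bool) = Cardinal.continuum := by simp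
    rw [← hcont]
    refine Cardinal.mk_le_of_injective (f := fun t => ⟨(Y (spread t) : Circle1),
      ha.mem_statCharSet_q hα hirr (hY _), ha.not_mem_statCharSet hα hirr hmono hrange
        (ha.eventually_le_norm hα hirr (hY _))⟩) ?_
    intro t t' htt
    obtain ⟨M, hM⟩ := eventually_atTop.1
      (ha.eventually_bit_eq hα hirr (hY _) (hY _) (congrArg Subtype.val htt))
    funext k
    simpa [spread] using hM (Nat.pair k M) (Nat.right_le_pair k M)
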